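/- Let Ψ₁₀ : [0,π] → ℝ be defined by Ψ₁₀(x) := −(16/π) Σ_{j=0}^∞ cos((2j+1)x)/((2j+1)² − 4)². Then (2/π) ∫₀^π ( Ψ₁₀'(x) + (π − 2x) sin(2x) ) cos(2x) dx = 3/4. -/

import Mathlib

open Set Real

noncomputable section

/-- `Ψ₁₀(x) = −(16/π) Σ_{j=0}^∞ cos((2j+1)x)/((2j+1)² − 4)²`. -/
def Psi10 (x : ℝ) : ℝ :=
  -(16/π) * ∑' j : ℕ, Real.cos ((2 * (j:ℝ) + 1) * x) / ((2 * (j:ℝ) + 1)^2 - 4)^2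

lemma odd_sq_hasSum : HasSum (fun j : ℕ => 1 / (2 * (j:ℝ) + 1)^2) (π^2/8) := by
  have h := hasSum_zeta_two
  have he : HasSum (fun j : ℕ => (1:ℝ) / (((2 * j : ℕ)) : ℝ)^2) (π^2/6/4) := by
    have := h.div_const 4
    refine this.congr_fun ?_ |> id
    intro j
    push_cast
    rw [mul_pow, div_div, mul_comm]
    norm_num
  have hinj : Function.Injective (fun j : ℕ => 2 * j + 1) := fun a b hab => by
    simp only at hab; omega
  have ho : Summable (fun j : ℕ => (1:ℝ) / (((2 * j + 1 : ℕ)) : ℝ)^2) :=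
    h.summable.comp_injective hinj
  have h2 := HasSum.even_add_odd (f := fun n : ℕ => (1:ℝ) / (n:ℝ)^2) he ho.hasSum
  have h3 := h2.unique h
  have h4 : ∑' j : ℕ, (1:ℝ) / (((2 * j + 1 : ℕ)) : ℝ)^2 = π^2/8 := by linarith
  have h5 := ho.hasSum
  rw [h4] at h5
  simpa using h5

lemma odd_ne (j : ℕ) : (2 * (j:ℝ) - 1) ≠ 0 := by
  intro h
  have : (2 * (j:ℤ) - 1) = 0 := by exact_mod_cast h
  omega

lemma psi_partial (N : ℕ) :
    ∑ j ∈ Finset.range N, (2 * (j:ℝ) + 1)^2 / ((2 * (j:ℝ) + 1)^2 - 4)^3 =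
      (∑ j ∈ Finset.range N, 1 / (2 * (j:ℝ) + 1)^2) / 32
      + (-((2 * (N:ℝ) - 1)⁻¹^3/16 - (2 * (N:ℝ) - 1)⁻¹/128)
        - ((2 * (N:ℝ) + 1)⁻¹^3/16 - (2 * (N:ℝ) + 1)⁻¹/128)
        + ((2 * (N:ℝ) + 1)⁻¹^2 - (2 * (N:ℝ) - 1)⁻¹^2)/64) := by
  induction N with
  | zero => norm_num
  | succ N ih =>
    rw [Finset.sum_range_succ, Finset.sum_range_succ, ih]
    push_cast
    have h1 := odd_ne N
    have h2 : (2 * (N:ℝ) + 1) ≠ 0 := by positivity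
    have h3 : (2 * (N:ℝ) + 3) ≠ 0 := by positivity
    have e1 : (2 * (N:ℝ) + 1)^2 - 4 = (2 * (N:ℝ) - 1) * (2 * (N:ℝ) + 3) := by ring
    have e2 : 2 * ((N:ℝ) + 1) - 1 = 2 * (N:ℝ) + 1 := by ring
    have e3 : 2 * ((N:ℝ) + 1) + 1 = 2 * (N:ℝ) + 3 := by ring
    rw [e1, e2, e3]
    generalize ∑ j ∈ Finset.range N, 1 / (2 * (j:ℝ) + 1)^2 = T
    field_simp
    ring

lemma psi_partial_tendsto : Filter.Tendsto
    (fun N : ℕ => ∑ j ∈ Finset.range N, (2 * (j:ℝ) + 1)^2 / ((2 * (j:ℝ) + 1)^2 - 4)^3)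
    Filter.atTop (nhds (π^2/256)) := by
  simp_rw [psi_partial]
  have hT := odd_sq_hasSum.tendsto_sum_nat
  have hN : Filter.Tendsto (fun N : ℕ => 2 * (N:ℝ)) Filter.atTop Filter.atTop :=
    tendsto_natCast_atTop_atTop.const_mul_atTop (by norm_num)
  have ha : Filter.Tendsto (fun N : ℕ => (2 * (N:ℝ) - 1)⁻¹) Filter.atTop (nhds 0) :=
    tendsto_inv_atTop_zero.comp (Filter.tendsto_atTop_add_const_right _ (-1) hN)
  have hb : Filter.Tendsto (fun N : ℕ => (2 * (N:ℝ) + 1)⁻¹) Filter.atTop (nhds 0) :=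
    tendsto_inv_atTop_zero.comp (Filter.tendsto_atTop_add_const_right _ 1 hN)
  have := (hT.div_const 32).add
    (((((ha.pow 3).div_const 16).sub (ha.div_const 128)).neg.sub
      (((hb.pow 3).div_const 16).sub (hb.div_const 128))).add
      (((hb.pow 2).sub (ha.pow 2)).div_const 64))
  convert this using 2
  ring

lemma coef_bound (j : ℕ) :
    |(2 * (j:ℝ) + 1) / ((2 * (j:ℝ) + 1)^2 - 4)^2| ≤ 9 * (1 / (2 * (j:ℝ) + 1)^2) := by
  have hn : (1:ℝ) ≤ 2 * (j:ℝ) + 1 := by linarith [(Nat.cast_nonneg j : (0:ℝ) ≤ j)]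
  have hd : ((2 * (j:ℝ) + 1)^2)^2 ≤ 9 * ((2 * (j:ℝ) + 1)^2 - 4)^2 := by
    rcases j with _ | j
    · norm_num
    · push_cast
      have : (0:ℝ) ≤ j := Nat.cast_nonneg j
      nlinarith [mul_nonneg this this]
  rw [abs_of_nonneg (by positivity)]
  generalize 2 * (j:ℝ) + 1 = n at *
  have hp : 0 < (n^2-4)^2 := by
    have : 0 < (n^2)^2 := by positivity
    linarith
  rw [mul_one_div, div_le_div_iff₀ hp (by positivity)]
  refine le_trans ?_ hd
  nlinarith [pow_le_pow_right₀ hn (show 3 ≤ 4 by norm_num)]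

lemma bound_summable : Summable (fun j : ℕ => 9 * (1 / (2 * (j:ℝ) + 1)^2)) :=
  odd_sq_hasSum.summable.mul_left 9

/-- the termwise derivative -/
def dterm (j : ℕ) (x : ℝ) : ℝ :=
  -((2 * (j:ℝ) + 1) / ((2 * (j:ℝ) + 1)^2 - 4)^2 * Real.sin ((2 * (j:ℝ) + 1) * x))

lemma dterm_bound (j : ℕ) (x : ℝ) : ‖dterm j x‖ ≤ 9 * (1 / (2 * (j:ℝ) + 1)^2) := by
  rw [dterm, norm_neg, Real.norm_eq_abs, abs_mul]
  exact (mul_le_of_le_one_right (abs_nonneg _) (Real.abs_sin_le_one _)).trans (coef_bound j)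

lemma psi_deriv (x : ℝ) : deriv Psi10 x = -(16/π) * ∑' j : ℕ, dterm j x := by
  refine HasDerivAt.deriv ?_
  refine HasDerivAt.const_mul (-(16/π)) ?_
  refine hasDerivAt_tsum (y₀ := π/2) bound_summable ?_ dterm_bound ?_ x
  · intro j y
    have h : HasDerivAt (fun y : ℝ => (2 * (j:ℝ) + 1) * y) (2 * (j:ℝ) + 1) y := by
      simpa using (hasDerivAt_id y).const_mul (2 * (j:ℝ) + 1)
    convert! h.cos.div_const (((2 * (j:ℝ) + 1)^2 - 4)^2) using 1
    rw [dterm]; ring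
  · convert summable_zero using 2 with j
    have : Real.cos ((2 * (j:ℝ) + 1) * (π/2)) = 0 := by
      rw [Real.cos_eq_zero_iff]
      exact ⟨j, by push_cast; ring⟩
    rw [this, zero_div]

lemma cos_odd (k : ℤ) : Real.cos ((2 * (k:ℝ) + 1) * π) = -1 := by
  rw [show (2 * (k:ℝ) + 1) * π = π + k * (2 * π) by ring, Real.cos_add_int_mul_two_pi, Real.cos_pi]

lemma int_term (j : ℕ) : ∫ x in (0:ℝ)..π, dterm j x * Real.cos (2*x) =
    -2 * ((2 * (j:ℝ) + 1)^2 / ((2 * (j:ℝ) + 1)^2 - 4)^3) := by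
  have h1 := odd_ne j
  have h3 : (2 * (j:ℝ) + 3) ≠ 0 := by positivity
  have e1 : (2 * (j:ℝ) + 1)^2 - 4 = (2 * (j:ℝ) - 1) * (2 * (j:ℝ) + 3) := by ring
  have hd : ∀ x ∈ uIcc (0:ℝ) π, HasDerivAt (fun x : ℝ =>
      (2 * (j:ℝ) + 1) / ((2 * (j:ℝ) + 1)^2 - 4)^2 *
      ((Real.cos ((2 * (j:ℝ) + 3) * x) / (2 * (j:ℝ) + 3)
        + Real.cos ((2 * (j:ℝ) - 1) * x) / (2 * (j:ℝ) - 1)) / 2))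
      (dterm j x * Real.cos (2*x)) x := by
    intro x _
    have ha : HasDerivAt (fun y : ℝ => (2 * (j:ℝ) + 3) * y) (2 * (j:ℝ) + 3) x := by
      simpa using (hasDerivAt_id x).const_mul (2 * (j:ℝ) + 3)
    have hb : HasDerivAt (fun y : ℝ => (2 * (j:ℝ) - 1) * y) (2 * (j:ℝ) - 1) x := by
      simpa using (hasDerivAt_id x).const_mul (2 * (j:ℝ) - 1)
    convert! (((ha.cos.div_const (2 * (j:ℝ) + 3)).add (hb.cos.div_const (2 * (j:ℝ) - 1))).div_const
      2).const_mul ((2 * (j:ℝ) + 1) / ((2 * (j:ℝ) + 1)^2 - 4)^2) using 1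
    rw [mul_div_cancel_right₀ _ h3, mul_div_cancel_right₀ _ h1, dterm,
      show (2 * (j:ℝ) + 3) * x = (2 * (j:ℝ) + 1) * x + 2 * x by ring,
      show (2 * (j:ℝ) - 1) * x = (2 * (j:ℝ) + 1) * x - 2 * x by ring,
      Real.sin_add, Real.sin_sub]
    ring
  rw [intervalIntegral.integral_eq_sub_of_hasDerivAt hd
    (by apply Continuous.intervalIntegrable; unfold dterm; fun_prop)]
  have c1 := cos_odd (j + 1)
  have c2 := cos_odd (j - 1)
  push_cast at c1 c2
  rw [show 2 * ((j:ℝ) + 1) + 1 = 2 * (j:ℝ) + 3 by ring] at c1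
  rw [show 2 * ((j:ℝ) - 1) + 1 = 2 * (j:ℝ) - 1 by ring] at c2
  simp only [c1, c2, mul_zero, Real.cos_zero, e1]
  field_simp
  ring

lemma int_psi : HasSum (fun j : ℕ => -2 * ((2 * (j:ℝ) + 1)^2 / ((2 * (j:ℝ) + 1)^2 - 4)^3))
    (∫ x in (0:ℝ)..π, (∑' j : ℕ, dterm j x) * Real.cos (2*x)) := by
  simp_rw [← int_term]
  refine intervalIntegral.hasSum_integral_of_dominated_convergence
    (fun j _ => 9 * (1 / (2 * (j:ℝ) + 1)^2)) ?_ ?_ ?_ ?_ ?_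
  · intro j
    apply Continuous.aestronglyMeasurable
    unfold dterm; fun_prop
  · intro j
    refine Filter.Eventually.of_forall fun x _ => ?_
    rw [norm_mul]
    exact (mul_le_of_le_one_right (norm_nonneg _) (Real.abs_cos_le_one _)).trans (dterm_bound j x)
  · exact Filter.Eventually.of_forall fun x _ => bound_summable
  · exact intervalIntegrable_const
  · exact Filter.Eventually.of_forall fun x _ =>
      (Summable.of_norm_bounded bound_summable (fun j => dterm_bound j x)).hasSum.mul_right _

lemma int_psi_val : ∫ x in (0:ℝ)..π, (∑' j : ℕ, dterm j x) * Real.cos (2*x) = -2 * (π^2/256) := by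
  refine tendsto_nhds_unique int_psi.tendsto_sum_nat ?_
  simp_rw [← Finset.mul_sum]
  exact psi_partial_tendsto.const_mul (-2)

lemma dsum_continuous : Continuous (fun x => ∑' j : ℕ, dterm j x) :=
  continuous_tsum (fun j => by unfold dterm; fun_prop) bound_summable dterm_bound

lemma int_second : ∫ x in (0:ℝ)..π, (π - 2*x) * Real.sin (2*x) * Real.cos (2*x) = π/4 := by
  have hd : ∀ x ∈ uIcc (0:ℝ) π, HasDerivAt (fun x : ℝ =>
      -(π - 2*x) * Real.cos (4*x) / 8 - Real.sin (4*x) / 16)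
      ((π - 2*x) * Real.sin (2*x) * Real.cos (2*x)) x := by
    intro x _
    have ha : HasDerivAt (fun y : ℝ => 4 * y) 4 x := by
      simpa using (hasDerivAt_id x).const_mul (4:ℝ)
    have hb : HasDerivAt (fun y : ℝ => -(π - 2 * y)) 2 x := by
      convert! (((hasDerivAt_id x).const_mul (2:ℝ)).const_sub π).neg using 1
      norm_num
    convert! ((hb.mul ha.cos).div_const 8).sub (ha.sin.div_const 16) using 1
    rw [show 4 * x = 2 * (2 * x) by ring, Real.sin_two_mul (2*x)]
    ring
  rw [intervalIntegral.integral_eq_sub_of_hasDerivAt hd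
    (by apply Continuous.intervalIntegrable; fun_prop)]
  have c1 : Real.cos (4 * π) = 1 := by
    simpa using Real.cos_nat_mul_two_pi 2 |> fun h => (by
      rw [← h]; push_cast; ring_nf : Real.cos (4 * π) = 1)
  have c2 : Real.sin (4 * π) = 0 := by simpa using Real.sin_nat_mul_pi 4
  simp only [c1, c2, mul_zero, Real.cos_zero, Real.sin_zero]
  ring

/-- The second-order Taylor coefficient `ν̃₂₀` of the Neumann
eigenvalue branch equals `3/4`. -/
theorem nu20_eq_three_quarters :
    (2/π) * ∫ x in (0:ℝ)..π,
        (deriv Psi10 x + (π - 2*x) * Real.sin (2*x)) * Real.cos (2*x) = 3/4 := by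
  have e : ∀ x : ℝ, (deriv Psi10 x + (π - 2*x) * Real.sin (2*x)) * Real.cos (2*x) =
      -(16/π) * ((∑' j : ℕ, dterm j x) * Real.cos (2*x))
        + (π - 2*x) * Real.sin (2*x) * Real.cos (2*x) := by
    intro x
    rw [psi_deriv]; ring
  simp_rw [e]
  have hc := dsum_continuous
  rw [intervalIntegral.integral_add, intervalIntegral.integral_const_mul, int_psi_val, int_second]
  · have := Real.pi_ne_zero
    field_simp
    norm_num
  · apply Continuous.intervalIntegrable
    fun_prop
  · apply Continuous.intervalIntegrable
    fun_prop

end
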